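/- arXiv:1503.06826 — 2 statements merged into one kernel-verified Lean document; each statement's English description precedes it below -/
import Mathlib

section
/- Let G be a concurrent game, s a state of G, and π a play from s. The following are equivalent: (1) Eve has a winning strategy in the suspect game H(G,π) from (s,Agt) whose outcome ρ' from (s,Agt) when Adam always obeys Eve satisfies proj₁(ρ') = ρ; (2) there is a trigger profile for π in G from s whose outcome from s is ρ. -/
/-- A concurrent game: states, players, actions, allowed actions (nonempty),
a deterministic transition table, and a preference relation for each player
(intended to be a preorder on plays, i.e. on `ℕ → Stat`). -/
structure ConcGame (Stat Agt Act : Type) where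
  Allow : Stat → Agt → Set Act
  Allow_nonempty : ∀ s A, (Allow s A).Nonempty
  Tab : Stat → (Agt → Act) → Stat
  pref : Agt → (ℕ → Stat) → (ℕ → Stat) → Prop

namespace ConcGame

variable {Stat Agt Act : Type}

/-- A move is legal at a state if every player's action is allowed there. -/
def Legal (G : ConcGame Stat Agt Act) (s : Stat) (m : Agt → Act) : Prop :=
  ∀ A, m A ∈ G.Allow s A

/-- A strategy for player `A` maps a history (the list of previously visited
states) together with the current state to an allowed action. -/
def IsStrategy (G : ConcGame Stat Agt Act) (A : Agt) (σ : List Stat → Stat → Act) : Prop :=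
  ∀ h s, σ h s ∈ G.Allow s A

/-- A strategy profile assigns a strategy to every player. -/
def IsProfile (G : ConcGame Stat Agt Act) (σ : Agt → List Stat → Stat → Act) : Prop :=
  ∀ A, G.IsStrategy A (σ A)

/-- The run of a strategy profile from a state: current state together with
the history of previously visited states. -/
def run (G : ConcGame Stat Agt Act) (σ : Agt → List Stat → Stat → Act) (s : Stat) :
    ℕ → Stat × List Stat
  | 0 => (s, [])
  | n + 1 =>
    let p := run G σ s n
    (G.Tab p.1 (fun A => σ A p.2 p.1), p.2 ++ [p.1])

/-- The unique infinite outcome of a strategy profile from a state. -/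
def outcome (G : ConcGame Stat Agt Act) (σ : Agt → List Stat → Stat → Act) (s : Stat)
    (n : ℕ) : Stat :=
  (run G σ s n).1

/-- Nash equilibrium from `s`: no player can unilaterally improve her outcome. -/
def IsNash [DecidableEq Agt] (G : ConcGame Stat Agt Act) (s : Stat)
    (σ : Agt → List Stat → Stat → Act) : Prop :=
  G.IsProfile σ ∧
    ∀ A τ, G.IsStrategy A τ →
      G.pref A (G.outcome (Function.update σ A τ) s) (G.outcome σ s)

end ConcGame

/-- The set of states occurring along a play. -/
def Occ {α : Type} (ρ : ℕ → α) : Set α := Set.range ρ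

/-- The set of states occurring infinitely often along a play. -/
def InfOcc {α : Type} (ρ : ℕ → α) : Set α := {x | ∀ n, ∃ m, n ≤ m ∧ ρ m = x}

/-- The set of suspect players for the transition `(s, s')` and the move `m`:
players that could unilaterally deviate from `m` and produce `s'`. -/
def Susp {Stat Agt Act : Type} [DecidableEq Agt] (G : ConcGame Stat Agt Act)
    (s s' : Stat) (m : Agt → Act) : Set Agt :=
  {A | ∃ a ∈ G.Allow s A, G.Tab s (Function.update m A a) = s'}

/-- A strategy for Eve in the suspect game maps a history of Eve-states and the
current Eve-state to a move; it must propose legal moves. -/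
def EveLegal {Stat Agt Act : Type} (G : ConcGame Stat Agt Act)
    (σE : List (Stat × Set Agt) → Stat × Set Agt → (Agt → Act)) : Prop :=
  ∀ h q, G.Legal q.1 (σE h q)

/-- Plays of the suspect game (sequences of Eve-states) consistent with Eve's
strategy `σE` from the Eve-state `q₀`: Adam freely chooses the next state (the
first component), and the suspect sets are updated accordingly. -/
def SGConsistent {Stat Agt Act : Type} [DecidableEq Agt] (G : ConcGame Stat Agt Act)
    (σE : List (Stat × Set Agt) → Stat × Set Agt → (Agt → Act))
    (q₀ : Stat × Set Agt) (q : ℕ → Stat × Set Agt) : Prop :=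
  q 0 = q₀ ∧
    ∀ n, (q (n + 1)).2 =
      (q n).2 ∩ Susp G (q n).1 (q (n + 1)).1 (σE ((List.range n).map q) (q n))

/-- A play of the suspect game `H(G,π)` is winning for Eve iff its first
projection is at most `π` for every player in the limit of the suspect sets. -/
def WinningPlay {Stat Agt Act : Type} (G : ConcGame Stat Agt Act) (π : ℕ → Stat)
    (q : ℕ → Stat × Set Agt) : Prop :=
  ∀ A ∈ ⋂ n, (q n).2, G.pref A (fun n => (q n).1) π

/-- Eve's strategy is winning from `q₀` in `H(G,π)` if all consistent plays are
winning for Eve. -/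
def WinningFrom {Stat Agt Act : Type} [DecidableEq Agt] (G : ConcGame Stat Agt Act)
    (π : ℕ → Stat)
    (σE : List (Stat × Set Agt) → Stat × Set Agt → (Agt → Act))
    (q₀ : Stat × Set Agt) : Prop :=
  ∀ q, SGConsistent G σE q₀ q → WinningPlay G π q

/-- The run of the suspect game from `q₀` when Adam always obeys Eve. -/
def obeyRun {Stat Agt Act : Type} [DecidableEq Agt] (G : ConcGame Stat Agt Act)
    (σE : List (Stat × Set Agt) → Stat × Set Agt → (Agt → Act))
    (q₀ : Stat × Set Agt) : ℕ → (Stat × Set Agt) × List (Stat × Set Agt)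
  | 0 => (q₀, [])
  | n + 1 =>
    let p := obeyRun G σE q₀ n
    let m := σE p.2 p.1
    let t := G.Tab p.1.1 m
    ((t, p.1.2 ∩ Susp G p.1.1 t m), p.2 ++ [p.1])

/-- The outcome of Eve's strategy from `q₀` when Adam always obeys Eve. -/
def obeyOutcome {Stat Agt Act : Type} [DecidableEq Agt] (G : ConcGame Stat Agt Act)
    (σE : List (Stat × Set Agt) → Stat × Set Agt → (Agt → Act))
    (q₀ : Stat × Set Agt) (n : ℕ) : Stat × Set Agt :=
  (obeyRun G σE q₀ n).1

/-- A trigger profile for the play `π` from `s`: any unilateral deviation yields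
an outcome that is at most `π` for the deviator. -/
def IsTrigger {Stat Agt Act : Type} [DecidableEq Agt] (G : ConcGame Stat Agt Act)
    (s : Stat) (π : ℕ → Stat) (σ : Agt → List Stat → Stat → Act) : Prop :=
  G.IsProfile σ ∧
    ∀ A τ, G.IsStrategy A τ → G.pref A (G.outcome (Function.update σ A τ) s) π

/-!
A player `A` stays suspect forever along a play `p` exactly when `p` is the outcome of a deviation
of `A` alone: each transition then comes with an action of `A` that explains it, and these actions
assemble into a strategy. Hence, if a profile and a strategy of Eve prescribe the same moves, then
Eve wins exactly when the outcome of every unilateral deviation is at most `π` for the deviator.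
Such a partner always exists: Eve can ignore the suspect sets in order to copy a profile, and the
players can recompute the suspect sets from the history in order to copy Eve.
-/

namespace ConcGame

variable {Stat Agt Act : Type} (G : ConcGame Stat Agt Act)

theorem run_snd_eq_map_outcome (σ : Agt → List Stat → Stat → Act) (s : Stat) (n : ℕ) :
    (G.run σ s n).2 = (List.range n).map (G.outcome σ s) := by
  induction n with
  | zero => rfl
  | succ n ih =>
    rw [List.range_succ, List.map_append, ← ih]
    rfl

theorem outcome_succ (σ : Agt → List Stat → Stat → Act) (s : Stat) (n : ℕ) :
    G.outcome σ s (n + 1) = G.Tab (G.outcome σ s n)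
      fun A ↦ σ A ((List.range n).map (G.outcome σ s)) (G.outcome σ s n) := by
  rw [← run_snd_eq_map_outcome]
  rfl

theorem outcome_eq_iff {σ : Agt → List Stat → Stat → Act} {s : Stat} {p : ℕ → Stat} :
    G.outcome σ s = p ↔
      p 0 = s ∧ ∀ n, p (n + 1) = G.Tab (p n) fun A ↦ σ A ((List.range n).map p) (p n) := by
  constructor
  · rintro rfl
    exact ⟨rfl, G.outcome_succ σ s⟩
  · rintro ⟨p_zero, p_succ⟩
    funext n
    induction n using Nat.strong_induction_on with
    | h n ih =>
      cases n with
      | zero => exact p_zero.symm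
      | succ n =>
        have hist : (List.range n).map (G.outcome σ s) = (List.range n).map p :=
          List.map_congr_left fun k hk ↦ ih k (Nat.lt_succ_of_lt (List.mem_range.1 hk))
        rw [outcome_succ, p_succ, ih n n.lt_succ_self, hist]

variable [DecidableEq Agt]

theorem update_strategy_apply (σ : Agt → List Stat → Stat → Act) (A : Agt)
    (τ : List Stat → Stat → Act) (h : List Stat) (t : Stat) :
    (fun B ↦ Function.update σ A τ B h t) = Function.update (fun B ↦ σ B h t) A (τ h t) :=
  funext fun B ↦ Function.apply_update (fun _ strategy ↦ strategy h t) σ A τ B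

theorem exists_deviation_outcome_eq_iff {σ : Agt → List Stat → Stat → Act} {A : Agt} {s : Stat}
    {p : ℕ → Stat} :
    (∃ τ, G.IsStrategy A τ ∧ G.outcome (Function.update σ A τ) s = p) ↔
      p 0 = s ∧
        ∀ n, A ∈ Susp G (p n) (p (n + 1)) fun B ↦ σ B ((List.range n).map p) (p n) := by
  classical
  simp only [outcome_eq_iff, update_strategy_apply]
  constructor
  · rintro ⟨τ, hτ, p_zero, p_succ⟩
    exact ⟨p_zero, fun n ↦ ⟨_, hτ _ _, (p_succ n).symm⟩⟩
  · rintro ⟨p_zero, hp⟩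
    choose a a_mem tab_a using hp
    -- The length of the history tells the deviator how far along `p` the play is; off `p`, any
    -- allowed action will do.
    let τ (h : List Stat) (t : Stat) : Act :=
      if t = p h.length then a h.length else (G.Allow_nonempty t A).some
    refine ⟨τ, fun h t ↦ ?_, p_zero, fun n ↦ ?_⟩
    · simp only [τ]
      split_ifs with ht
      · exact ht ▸ a_mem h.length
      · exact (G.Allow_nonempty t A).some_mem
    · have τ_eq : τ ((List.range n).map p) (p n) = a n := by simp [τ]
      rw [τ_eq, tab_a]

end ConcGame

section SuspectGame

variable {Stat Agt Act : Type} [DecidableEq Agt] (G : ConcGame Stat Agt Act)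
  (σE : List (Stat × Set Agt) → Stat × Set Agt → (Agt → Act)) (P : Set Agt)

variable {G σE} in
theorem SGConsistent.mem_iInter_snd_iff {q₀ : Stat × Set Agt} {q : ℕ → Stat × Set Agt}
    (hq : SGConsistent G σE q₀ q) {A : Agt} :
    A ∈ ⋂ n, (q n).2 ↔
      A ∈ q₀.2 ∧
        ∀ n, A ∈ Susp G (q n).1 (q (n + 1)).1 (σE ((List.range n).map q) (q n)) := by
  obtain ⟨rfl, q_succ⟩ := hq
  rw [Set.mem_iInter]
  constructor
  · intro hA
    exact ⟨hA 0, fun n ↦ (q_succ n ▸ hA (n + 1)).2⟩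
  · rintro ⟨hA_zero, hA⟩ n
    induction n with
    | zero => exact hA_zero
    | succ n ih => exact q_succ n ▸ ⟨ih, hA n⟩

theorem obeyRun_snd_eq_map_obeyOutcome (q₀ : Stat × Set Agt) (n : ℕ) :
    (obeyRun G σE q₀ n).2 = (List.range n).map (obeyOutcome G σE q₀) := by
  induction n with
  | zero => rfl
  | succ n ih =>
    rw [List.range_succ, List.map_append, ← ih]
    rfl

theorem fst_obeyOutcome_succ (q₀ : Stat × Set Agt) (n : ℕ) :
    (obeyOutcome G σE q₀ (n + 1)).1 = G.Tab (obeyOutcome G σE q₀ n).1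
      (σE ((List.range n).map (obeyOutcome G σE q₀)) (obeyOutcome G σE q₀ n)) := by
  rw [← obeyRun_snd_eq_map_obeyOutcome]
  rfl

theorem sgConsistent_obeyOutcome (q₀ : Stat × Set Agt) :
    SGConsistent G σE q₀ (obeyOutcome G σE q₀) := by
  refine ⟨rfl, fun n ↦ ?_⟩
  rw [fst_obeyOutcome_succ, ← obeyRun_snd_eq_map_obeyOutcome]
  rfl

/-- The suspect set reached when the history `h` of Eve-states is followed by the state `t`;
`P` is the initial suspect set, used when `h` is empty. -/
def nextSuspects (h : List (Stat × Set Agt)) (t : Stat) : Set Agt :=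
  match h.getLast? with
  | none => P
  | some q => q.2 ∩ Susp G q.1 t (σE h.dropLast q)

/-- The history of Eve-states whose states are those of `h`, with the suspect sets that arise from
the initial suspect set `P` when Eve plays `σE`. -/
def liftHistory (h : List Stat) : List (Stat × Set Agt) :=
  h.foldl (fun acc t ↦ acc ++ [(t, nextSuspects G σE P acc t)]) []

/-- The play of the suspect game in which Eve plays `σE` from the initial suspect set `P` and Adam
chooses the states of `p`. -/
def liftPlay (p : ℕ → Stat) (n : ℕ) : Stat × Set Agt :=
  (p n, nextSuspects G σE P (liftHistory G σE P ((List.range n).map p)) (p n))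

theorem liftHistory_concat (h : List Stat) (t : Stat) :
    liftHistory G σE P (h ++ [t]) =
      liftHistory G σE P h ++ [(t, nextSuspects G σE P (liftHistory G σE P h) t)] := by
  simp [liftHistory]

theorem nextSuspects_map_range_succ (q : ℕ → Stat × Set Agt) (n : ℕ) (t : Stat) :
    nextSuspects G σE P ((List.range (n + 1)).map q) t =
      (q n).2 ∩ Susp G (q n).1 t (σE ((List.range n).map q) (q n)) := by
  simp [nextSuspects, List.range_succ]

theorem liftHistory_map_range (p : ℕ → Stat) (n : ℕ) :
    liftHistory G σE P ((List.range n).map p) = (List.range n).map (liftPlay G σE P p) := by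
  induction n with
  | zero => rfl
  | succ n ih =>
    simp only [List.range_succ, List.map_append, List.map_cons, List.map_nil, liftHistory_concat,
      liftPlay, ih]

theorem sgConsistent_liftPlay (p : ℕ → Stat) :
    SGConsistent G σE (p 0, P) (liftPlay G σE P p) := by
  refine ⟨rfl, fun n ↦ ?_⟩
  rw [← nextSuspects_map_range_succ G σE P, ← liftHistory_map_range]
  rfl

variable {G σE} in
theorem SGConsistent.eq_liftPlay {q₀ : Stat × Set Agt} {q : ℕ → Stat × Set Agt}
    (hq : SGConsistent G σE q₀ q) :
    q = liftPlay G σE q₀.2 fun n ↦ (q n).1 := by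
  obtain ⟨rfl, q_succ⟩ := hq
  funext n
  induction n using Nat.strong_induction_on with
  | h n ih =>
    refine Prod.ext rfl ?_
    cases n with
    | zero => rfl
    | succ n =>
      have hist : (List.range n).map q =
          (List.range n).map (liftPlay G σE (q 0).2 fun n ↦ (q n).1) :=
        List.map_congr_left fun k hk ↦ ih k (Nat.lt_succ_of_lt (List.mem_range.1 hk))
      rw [q_succ, (sgConsistent_liftPlay G σE (q 0).2 _).2, ← hist, ← ih n n.lt_succ_self]
      rfl

end SuspectGame

section Correspondence

variable {Stat Agt Act : Type}

/-- Eve's strategy that plays as the profile `σ` does, disregarding the suspect sets. -/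
def eveOfProfile (σ : Agt → List Stat → Stat → Act) :
    List (Stat × Set Agt) → Stat × Set Agt → (Agt → Act) :=
  fun h q A ↦ σ A (h.map Prod.fst) q.1

theorem ConcGame.IsProfile.eveLegal_eveOfProfile {G : ConcGame Stat Agt Act}
    {σ : Agt → List Stat → Stat → Act} (isProfile : G.IsProfile σ) :
    EveLegal G (eveOfProfile σ) :=
  fun _ _ A ↦ isProfile A _ _

variable [DecidableEq Agt] (G : ConcGame Stat Agt Act)

/-- Eve's strategy `σE` and the profile `σ` prescribe the same moves along every play of the
suspect game from `q₀` that is consistent with `σE`. -/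
def MovesAgree (σE : List (Stat × Set Agt) → Stat × Set Agt → (Agt → Act))
    (q₀ : Stat × Set Agt) (σ : Agt → List Stat → Stat → Act) : Prop :=
  ∀ q, SGConsistent G σE q₀ q → ∀ n,
    σE ((List.range n).map q) (q n) =
      fun A ↦ σ A ((List.range n).map fun k ↦ (q k).1) (q n).1

/-- The profile that plays as `σE` does once the suspect sets, starting from `P`, have been
recomputed from the history of states. -/
def profileOfEve (σE : List (Stat × Set Agt) → Stat × Set Agt → (Agt → Act)) (P : Set Agt) :
    Agt → List Stat → Stat → Act :=
  fun A h t ↦ σE (liftHistory G σE P h) (t, nextSuspects G σE P (liftHistory G σE P h) t) A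

theorem EveLegal.isProfile_profileOfEve {G : ConcGame Stat Agt Act}
    {σE : List (Stat × Set Agt) → Stat × Set Agt → (Agt → Act)} (legal : EveLegal G σE)
    (P : Set Agt) : G.IsProfile (profileOfEve G σE P) :=
  fun A _ t ↦ legal _ (t, _) A

theorem movesAgree_profileOfEve (σE : List (Stat × Set Agt) → Stat × Set Agt → (Agt → Act))
    (s : Stat) (P : Set Agt) : MovesAgree G σE (s, P) (profileOfEve G σE P) := by
  intro q hq n
  calc
    σE ((List.range n).map q) (q n) =
        σE ((List.range n).map (liftPlay G σE P fun k ↦ (q k).1))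
          (liftPlay G σE P (fun k ↦ (q k).1) n) := by
      rw [← hq.eq_liftPlay]
    _ = fun A ↦ profileOfEve G σE P A ((List.range n).map fun k ↦ (q k).1) (q n).1 := by
      rw [← liftHistory_map_range]
      rfl

theorem movesAgree_eveOfProfile (σ : Agt → List Stat → Stat → Act) (q₀ : Stat × Set Agt) :
    MovesAgree G (eveOfProfile σ) q₀ σ := by
  intro q _ n
  funext A
  simp only [eveOfProfile, List.map_map, Function.comp_def]

namespace MovesAgree

variable {G} {σE : List (Stat × Set Agt) → Stat × Set Agt → (Agt → Act)}
  {σ : Agt → List Stat → Stat → Act} {s : Stat} {P : Set Agt}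

theorem outcome_eq (hσ : MovesAgree G σE (s, P) σ) :
    G.outcome σ s = fun n ↦ (obeyOutcome G σE (s, P) n).1 := by
  refine G.outcome_eq_iff.2 ⟨rfl, fun n ↦ ?_⟩
  rw [fst_obeyOutcome_succ, hσ _ (sgConsistent_obeyOutcome G σE (s, P))]

theorem winningFrom_iff (hσ : MovesAgree G σE (s, P) σ) {π : ℕ → Stat} :
    WinningFrom G π σE (s, P) ↔
      ∀ A ∈ P, ∀ τ, G.IsStrategy A τ → G.pref A (G.outcome (Function.update σ A τ) s) π := by
  constructor
  · intro hW A hA τ hτ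
    set p := G.outcome (Function.update σ A τ) s with hp
    have hq : SGConsistent G σE (s, P) (liftPlay G σE P p) := sgConsistent_liftPlay G σE P p
    obtain ⟨-, A_suspect⟩ := G.exists_deviation_outcome_eq_iff.1 ⟨τ, hτ, hp.symm⟩
    refine hW _ hq A (hq.mem_iInter_snd_iff.2 ⟨hA, fun n ↦ ?_⟩)
    rw [hσ _ hq]
    exact A_suspect n
  · intro hT q hq A hA
    obtain ⟨A_mem, A_suspect⟩ := hq.mem_iInter_snd_iff.1 hA
    simp only [hσ q hq] at A_suspect
    have q_zero : (q 0).1 = s := congrArg Prod.fst hq.1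
    obtain ⟨τ, hτ, outcome_eq⟩ :=
      G.exists_deviation_outcome_eq_iff (p := fun n ↦ (q n).1).2 ⟨q_zero, A_suspect⟩
    exact outcome_eq ▸ hT A A_mem τ hτ

end MovesAgree

theorem stmt4_general (s : Stat) (π ρ : ℕ → Stat) :
    (∃ σE, EveLegal G σE ∧ WinningFrom G π σE (s, Set.univ) ∧
        ∀ n, (obeyOutcome G σE (s, Set.univ) n).1 = ρ n) ↔
      ∃ σ, IsTrigger G s π σ ∧ ∀ n, G.outcome σ s n = ρ n := by
  constructor
  · rintro ⟨σE, legal, winning, outcome_eq⟩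
    have agree := movesAgree_profileOfEve G σE s Set.univ
    refine ⟨_, ⟨legal.isProfile_profileOfEve Set.univ, fun A ↦ ?_⟩, ?_⟩
    · exact agree.winningFrom_iff.1 winning A (Set.mem_univ A)
    · rwa [agree.outcome_eq]
  · rintro ⟨σ, ⟨isProfile, trigger⟩, outcome_eq⟩
    have agree := movesAgree_eveOfProfile G σ (s, Set.univ)
    refine ⟨_, isProfile.eveLegal_eveOfProfile, ?_, ?_⟩
    · exact agree.winningFrom_iff.2 fun A _ ↦ trigger A
    · rwa [agree.outcome_eq] at outcome_eq

end Correspondence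

/-- Eve has a winning strategy in the suspect game `H(G,π)`
from `(s, Agt)` whose obedient outcome projects to `ρ` iff there is a trigger
profile for `π` in `G` from `s` with outcome `ρ`. -/
theorem stmt4 {Stat Agt Act : Type} [DecidableEq Agt] (G : ConcGame Stat Agt Act)
    (hrefl : ∀ A χ, G.pref A χ χ)
    (htrans : ∀ A χ₁ χ₂ χ₃, G.pref A χ₁ χ₂ → G.pref A χ₂ χ₃ → G.pref A χ₁ χ₃)
    (s : Stat) (π : ℕ → Stat) (hπ : π 0 = s) (ρ : ℕ → Stat) :
    (∃ σE, EveLegal G σE ∧ WinningFrom G π σE (s, Set.univ) ∧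
        ∀ n, (obeyOutcome G σE (s, Set.univ) n).1 = ρ n) ↔
      ∃ σ, IsTrigger G s π σ ∧ ∀ n, G.outcome σ s n = ρ n :=
  stmt4_general G s π ρ
end

section
/- Let H be a finite turn-based two-player game between Eve and Adam, let σ be a strategy for Eve, and let s₀ be a state of H. Then there is a memoryless strategy σ' for Eve such that for every outcome ρ' of σ' from s₀ there exists an outcome ρ of σ from s₀ with Inf(ρ') ⊆ Inf(ρ). -/
/-- A turn-based two-player game between Eve and Adam: a directed graph whose
vertices are partitioned into Eve's vertices and Adam's vertices, every vertex
having at least one successor. -/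
structure TBGame (V : Type) where
  isEve : V → Prop
  edge : V → V → Prop
  succ_nonempty : ∀ v, ∃ w, edge v w

namespace TBGame

variable {V : Type}

/-- A strategy for Eve maps each history (previously visited vertices together
with the current vertex) ending in an Eve-vertex to a successor. -/
def IsEveStrat (H : TBGame V) (σ : List V → V → V) : Prop :=
  ∀ h v, H.isEve v → H.edge v (σ h v)

/-- An outcome of Eve's strategy `σ` from `s₀`: an infinite path from `s₀`
in which every step from an Eve-vertex follows `σ`. -/
def IsOutcome (H : TBGame V) (σ : List V → V → V) (s₀ : V) (ρ : ℕ → V) : Prop :=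
  ρ 0 = s₀ ∧ (∀ n, H.edge (ρ n) (ρ (n + 1))) ∧
    ∀ n, H.isEve (ρ n) → ρ (n + 1) = σ ((List.range n).map ρ) (ρ n)

end TBGame

/-- A strategy is memoryless if its value does not depend on the history. -/
def Memoryless {V : Type} (σ : List V → V → V) : Prop :=
  ∀ h h' v, σ h v = σ h' v

/-!
Let Eve's objective be that some outcome of `σ` from `s₀` visits infinitely often every vertex that
the play does. Consider a region `X`, maximal for inclusion, from which Eve has a positional
strategy winning this objective. Suppose `s₀ ∉ X`. By maximality no vertex outside `X` can be
attracted into `X`, so after every history the strategy `σ` leaves a move that stays outside `X`.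
Among the histories consistent with `σ` that avoid `X`, take one from which the set `S` of vertices
still reachable is minimal. Whatever happens later, every vertex of `S` remains reachable, so some
outcome of `σ` visits all of `S` infinitely often. Choosing for each vertex of `S` one history
ending there and playing as `σ` does after it is a positional strategy confining the play to
`X ∪ S`. A play that never enters `X` then stays in `S`, hence meets the objective, so `X ∪ S`
contradicts maximality.
-/

open Filter Relation

section Paths

variable {α ι V : Type*} {r : α → α → Prop}

theorem exists_forall_getElem_eq_of_isPrefix {u : ℕ → List α} (hu : ∀ n, u n <+: u (n + 1))
    (hlen : ∀ n, n ≤ (u n).length) :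
    ∃ t : ℕ → α, ∀ n i (hi : i < (u n).length), (u n)[i] = t i := by
  have isPrefix_of_le {m n : ℕ} (h : m ≤ n) : u m <+: u n :=
    Nat.rel_of_forall_rel_succ_of_le List.IsPrefix hu h
  refine ⟨fun i ↦ (u (i + 1))[i]'(hlen (i + 1)), fun n i hi ↦ ?_⟩
  rcases le_total n (i + 1) with h | h
  · exact (isPrefix_of_le h).getElem hi
  · exact ((isPrefix_of_le h).getElem (hlen (i + 1))).symm

theorem exists_isChain_cons_append_of_transGen {a b : α} (h : TransGen r a b) :
    ∃ l : List α, (a :: (l ++ [b])).IsChain r := by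
  induction h using TransGen.head_induction_on with
  | single hab => exact ⟨[], .cons_cons hab (.singleton b)⟩
  | head hac _ ih =>
    obtain ⟨l, hl⟩ := ih
    exact ⟨_ :: l, .cons_cons hac hl⟩

theorem exists_path_through_of_transGen {s : ℕ → α}
    (hs : ∀ n, TransGen r (s n) (s (n + 1))) :
    ∃ (t : ℕ → α) (φ : ℕ → ℕ), t 0 = s 0 ∧ (∀ n, r (t n) (t (n + 1))) ∧ StrictMono φ ∧
      ∀ n, t (φ n) = s n := by
  choose l chain_l using fun n ↦ exists_isChain_cons_append_of_transGen (hs n)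
  let u : ℕ → List α := fun n ↦ (List.range n).flatMap fun k ↦ s k :: l k
  have u_succ (n) : u (n + 1) = u n ++ s n :: l n := by
    simp only [u, List.range_succ, List.flatMap_append, List.flatMap_singleton]
  have length_lt (n) : (u n).length < (u (n + 1)).length := by simp [u_succ]
  have length_strictMono : StrictMono fun n ↦ (u n).length := strictMono_nat_of_lt_succ length_lt
  have chain_u (n) : (u n ++ [s n]).IsChain r := by
    induction n with
    | zero => exact .singleton _
    | succ n ih =>
      rw [u_succ, List.append_assoc, List.cons_append, List.isChain_split]
      exact ⟨ih, chain_l n⟩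
  obtain ⟨t, ht⟩ := exists_forall_getElem_eq_of_isPrefix
    (fun n ↦ u_succ n ▸ List.prefix_append _ _) fun n ↦ length_strictMono.le_apply (x := n)
  have t_length (n) : t (u n).length = s n := by
    rw [← ht (n + 1) _ (length_lt n)]
    simp only [u_succ, List.getElem_append_right, le_refl, Nat.sub_self, List.getElem_cons_zero]
  refine ⟨t, fun n ↦ (u n).length, t_length 0, fun n ↦ ?_, length_strictMono, t_length⟩
  have hlt : n + 1 < (u (n + 2)).length := length_strictMono.le_apply
  rw [← ht (n + 2) n (by lia), ← ht (n + 2) (n + 1) hlt]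
  exact List.isChain_iff_getElem.mp (chain_u (n + 2)).left_of_append n hlt

theorem exists_forall_frequently_eq [Countable ι] [Nonempty ι] :
    ∃ e : ℕ → ι, ∀ i, ∃ᶠ n in atTop, e n = i := by
  obtain ⟨g, hg⟩ := exists_surjective_nat ι
  refine ⟨fun n ↦ g n.unpair.1, fun i ↦ frequently_atTop.mpr fun N ↦ ?_⟩
  obtain ⟨k, rfl⟩ := hg i
  exact ⟨Nat.pair k N, Nat.right_le_pair k N, congrArg (fun p ↦ g p.1) (Nat.unpair_pair k N)⟩

theorem exists_path_forall_frequently_mem [Countable ι] [Nonempty ι] {C : Set α} {T : ι → Set α}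
    (h : ∀ c ∈ C, ∀ i, ∃ d ∈ C, TransGen r c d ∧ d ∈ T i) {a : α} (ha : a ∈ C) :
    ∃ t : ℕ → α, t 0 = a ∧ (∀ n, r (t n) (t (n + 1))) ∧ ∀ i, ∃ᶠ n in atTop, t n ∈ T i := by
  obtain ⟨e, he⟩ := exists_forall_frequently_eq (ι := ι)
  choose! next next_mem next_rel next_target using h
  let s : ℕ → α := fun n ↦ n.rec a fun k c ↦ next c (e k)
  have s_mem (n) : s n ∈ C := by
    induction n with
    | zero => exact ha
    | succ n ih => exact next_mem _ ih _
  obtain ⟨t, φ, t_zero, ht, hφ, t_φ⟩ :=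
    exists_path_through_of_transGen fun n ↦ next_rel (s n) (s_mem n) (e n)
  refine ⟨t, t_zero, ht, fun i ↦ ?_⟩
  have hit (n) (hn : e n = i) : t (φ (n + 1)) ∈ T i := by
    rw [t_φ, ← hn]
    exact next_target (s n) (s_mem n) (e n)
  exact (hφ.comp (strictMono_id.add_const 1)).tendsto_atTop.frequently ((he i).mono hit)

/-- The labels, under `f`, of the vertices reachable from `a` in the graph `r`. Applied to
histories labelled by their current vertex, it is the set of vertices a play may still visit. -/
def reachableLabels (r : α → α → Prop) (f : α → V) (a : α) : Set V :=
  f '' {b | ReflTransGen r a b}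

theorem exists_forall_reachableLabels_eq [Finite V] (r : α → α → Prop) (f : α → V) (a : α) :
    ∃ b, ReflTransGen r a b ∧
      ∀ c, ReflTransGen r b c → reachableLabels r f c = reachableLabels r f b := by
  obtain ⟨b, hab, hmin⟩ := exists_minimalFor_of_wellFoundedLT (ReflTransGen r a)
    (reachableLabels r f) ⟨a, .refl⟩
  refine ⟨b, hab, fun c hbc ↦ ?_⟩
  have hsub : reachableLabels r f c ⊆ reachableLabels r f b :=
    Set.image_mono fun d hcd ↦ hbc.trans hcd
  exact hsub.antisymm (hmin (hab.trans hbc) hsub)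

theorem exists_path_reachableLabels_frequently [Finite V] (hr : ∀ a, ∃ b, r a b) (f : α → V)
    (a : α) :
    ∃ b, ∃ t : ℕ → α, t 0 = a ∧ (∀ n, r (t n) (t (n + 1))) ∧
      ∀ v ∈ reachableLabels r f b, ∃ᶠ n in atTop, f (t n) = v := by
  obtain ⟨b, hab, hb⟩ := exists_forall_reachableLabels_eq r f a
  have : Nonempty (reachableLabels r f b) := ⟨f b, b, .refl, rfl⟩
  have revisit : ∀ c ∈ {c | Join (ReflTransGen r) c b}, ∀ v : reachableLabels r f b,
      ∃ d ∈ {c | Join (ReflTransGen r) c b}, TransGen r c d ∧ d ∈ f ⁻¹' {↑v} := by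
    rintro c ⟨c', hcc', hbc'⟩ ⟨v, hv⟩
    obtain ⟨e, hc'e⟩ := hr c'
    have hbe : ReflTransGen r b e := hbc'.tail hc'e
    rw [← hb e hbe] at hv
    obtain ⟨d, hed, hdv⟩ := hv
    exact ⟨d, ⟨d, .refl, hbe.trans hed⟩, (TransGen.tail' hcc' hc'e).trans_left hed, hdv⟩
  obtain ⟨t, t_zero, ht, hfreq⟩ :=
    exists_path_forall_frequently_mem revisit (a := a) ⟨b, hab, .refl⟩
  exact ⟨b, t, t_zero, ht, fun v hv ↦ hfreq ⟨v, hv⟩⟩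

end Paths

theorem mem_infOcc_iff_frequently {α : Type} {ρ : ℕ → α} {x : α} :
    x ∈ InfOcc ρ ↔ ∃ᶠ n in atTop, ρ n = x :=
  frequently_atTop.symm

theorem infOcc_comp_add {α : Type} (ρ : ℕ → α) (k : ℕ) :
    InfOcc (fun n ↦ ρ (n + k)) = InfOcc ρ := by
  ext x
  rw [mem_infOcc_iff_frequently, mem_infOcc_iff_frequently,
    ← frequently_map (m := (· + k)) (P := fun n ↦ ρ n = x), map_add_atTop_eq_nat]

theorem infOcc_subset_of_forall_mem {α : Type} {ρ : ℕ → α} {S : Set α} (h : ∀ n, ρ n ∈ S) :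
    InfOcc ρ ⊆ S := by
  intro x hx
  obtain ⟨n, -, rfl⟩ := hx 0
  exact h n

namespace TBGame

variable {V : Type} {H : TBGame V} {σ : List V → V → V} {s₀ : V}

/-- `H.Move τ v w`: the edge from `v` to `w` may be played when Eve uses the positional choice
`τ`. Taking `τ = σ h` describes the moves available after the history `h` under a strategy `σ`. -/
def Move (H : TBGame V) (τ : V → V) (v w : V) : Prop :=
  H.edge v w ∧ (H.isEve v → w = τ v)

theorem IsOutcome.move {τ : V → V} {ρ : ℕ → V} (hρ : H.IsOutcome (fun _ ↦ τ) s₀ ρ) (n : ℕ) :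
    H.Move τ (ρ n) (ρ (n + 1)) :=
  ⟨hρ.2.1 n, hρ.2.2 n⟩

/-- One step of the unravelling of the game under `σ`, whose vertices are pairs of a history and
the current vertex; as in `IsOutcome`, the history does not contain the current vertex. -/
def HistoryMove (H : TBGame V) (σ : List V → V → V) (p q : List V × V) : Prop :=
  q.1 = p.1 ++ [p.2] ∧ H.Move (σ p.1) p.2 q.2

theorem isOutcome_of_historyMove {s : ℕ → List V × V} (h0 : s 0 = ([], s₀))
    (hs : ∀ n, H.HistoryMove σ (s n) (s (n + 1))) : H.IsOutcome σ s₀ fun n ↦ (s n).2 := by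
  have history_eq (n) : (s n).1 = (List.range n).map fun i ↦ (s i).2 := by
    induction n with
    | zero => simp [h0]
    | succ n ih => rw [(hs n).1, ih, List.range_succ, List.map_append, List.map_singleton]
  exact ⟨congrArg Prod.snd h0, fun n ↦ (hs n).2.1, fun n hn ↦ history_eq n ▸ (hs n).2.2 hn⟩

theorem exists_outcome_covering_closed_set [Finite V] {X : Set V} (h0 : s₀ ∉ X)
    (hX : ∀ h, ∀ v ∉ X, ∃ w ∉ X, H.Move (σ h) v w) :
    ∃ S : Set V, S.Nonempty ∧ Disjoint S X ∧
      (∀ v ∈ S, ∃ h, ∀ w, H.Move (σ h) v w → w ∈ X ∪ S) ∧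
      ∃ ρ, H.IsOutcome σ s₀ ρ ∧ S ⊆ InfOcc ρ := by
  let r : {p : List V × V // p.2 ∉ X} → {p : List V × V // p.2 ∉ X} → Prop :=
    InvImage (H.HistoryMove σ) Subtype.val
  have serial : ∀ p, ∃ q, r p q := by
    rintro ⟨⟨h, v⟩, hv⟩
    obtain ⟨w, hw, hvw⟩ := hX h v hv
    exact ⟨⟨(h ++ [v], w), hw⟩, rfl, hvw⟩
  obtain ⟨b, t, t_zero, ht, hfreq⟩ :=
    exists_path_reachableLabels_frequently serial (fun p ↦ p.1.2) ⟨([], s₀), h0⟩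
  refine ⟨reachableLabels r (fun p ↦ p.1.2) b, ⟨_, b, .refl, rfl⟩, ?_, ?_, fun n ↦ (t n).1.2,
    isOutcome_of_historyMove (congrArg Subtype.val t_zero) ht,
    fun v hv ↦ mem_infOcc_iff_frequently.mpr (hfreq v hv)⟩
  · rw [Set.disjoint_left]
    rintro _ ⟨p, -, rfl⟩
    exact p.2
  · rintro _ ⟨p, hbp, rfl⟩
    refine ⟨p.1.1, fun w hw ↦ ?_⟩
    by_cases hwX : w ∈ X
    · exact .inl hwX
    · exact .inr ⟨⟨(p.1.1 ++ [p.1.2], w), hwX⟩, hbp.tail ⟨rfl, hw⟩, rfl⟩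

/-- A set `X` is closed for `τ` if no play following `τ` can leave it. -/
def IsClosedFor (H : TBGame V) (τ : V → V) (X : Set V) : Prop :=
  ∀ v ∈ X, ∀ w, H.Move τ v w → w ∈ X

theorem IsClosedFor.forall_mem {τ : V → V} {X : Set V} (hX : H.IsClosedFor τ X) {ρ : ℕ → V}
    (hρ : ∀ n, H.Move τ (ρ n) (ρ (n + 1))) (h0 : ρ 0 ∈ X) (n : ℕ) : ρ n ∈ X := by
  induction n with
  | zero => exact h0
  | succ n ih => exact hX _ ih _ (hρ n)

/-- The positional choice `τ` wins from every vertex of the region `X`, which it never leaves, for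
the objective that the set of vertices visited infinitely often satisfies `P`. -/
structure WinsOn (H : TBGame V) (P : Set V → Prop) (τ : V → V) (X : Set V) : Prop where
  isEveStrat : H.IsEveStrat fun _ ↦ τ
  isClosedFor : H.IsClosedFor τ X
  infOcc : ∀ ρ, (∀ n, H.Move τ (ρ n) (ρ (n + 1))) → ρ 0 ∈ X → P (InfOcc ρ)

section WinningRegion

variable {P : Set V → Prop} {X S : Set V} {τ τ' : V → V}

open Classical in
theorem move_piecewise_of_mem {v w : V} (hv : v ∈ X) :
    H.Move (X.piecewise τ τ') v w ↔ H.Move τ v w := by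
  simp only [Move, Set.piecewise_eq_of_mem _ _ _ hv]

open Classical in
theorem move_piecewise_of_notMem {v w : V} (hv : v ∉ X) :
    H.Move (X.piecewise τ τ') v w ↔ H.Move τ' v w := by
  simp only [Move, Set.piecewise_eq_of_notMem _ _ _ hv]

open Classical in
theorem WinsOn.union (hX : H.WinsOn P τ X) (hτ' : H.IsEveStrat fun _ ↦ τ')
    (hS : ∀ v ∈ S, ∀ w, H.Move τ' v w → w ∈ X ∪ S)
    (hP : ∀ ρ, (∀ n, H.Move τ' (ρ n) (ρ (n + 1))) → (∀ n, ρ n ∈ S) → P (InfOcc ρ)) :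
    H.WinsOn P (X.piecewise τ τ') (X ∪ S) := by
  have closed_X : H.IsClosedFor (X.piecewise τ τ') X := fun v hv w hw ↦
    hX.isClosedFor v hv w ((move_piecewise_of_mem hv).mp hw)
  have closed_union : H.IsClosedFor (X.piecewise τ τ') (X ∪ S) := by
    intro v hv w hw
    by_cases hvX : v ∈ X
    · exact .inl (closed_X v hvX w hw)
    · exact hS v (hv.resolve_left hvX) w ((move_piecewise_of_notMem hvX).mp hw)
  refine ⟨fun h v hv ↦ ?_, closed_union, fun ρ hρ h0 ↦ ?_⟩
  · by_cases hvX : v ∈ X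
    · simpa only [Set.piecewise_eq_of_mem _ _ _ hvX] using hX.isEveStrat h v hv
    · simpa only [Set.piecewise_eq_of_notMem _ _ _ hvX] using hτ' h v hv
  by_cases hreach : ∃ k, ρ k ∈ X
  · obtain ⟨k, hk⟩ := hreach
    have tail_move (n) : H.Move (X.piecewise τ τ') (ρ (n + k)) (ρ (n + 1 + k)) :=
      Nat.add_right_comm n k 1 ▸ hρ (n + k)
    have tail_mem := closed_X.forall_mem tail_move (by rwa [Nat.zero_add])
    rw [← infOcc_comp_add ρ k]
    exact hX.infOcc _ (fun n ↦ (move_piecewise_of_mem (tail_mem n)).mp (tail_move n)) (tail_mem 0)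
  · push Not at hreach
    exact hP ρ (fun n ↦ (move_piecewise_of_notMem (hreach n)).mp (hρ n))
      fun n ↦ (closed_union.forall_mem hρ h0 n).resolve_left (hreach n)

/-- Eve has a positional strategy winning from the whole region `X` in the sense of `WinsOn`. -/
def IsWinningRegion (H : TBGame V) (P : Set V → Prop) (X : Set V) : Prop :=
  ∃ τ, H.WinsOn P τ X

theorem subset_of_maximal_isWinningRegion (hX : Maximal (H.IsWinningRegion P) X)
    (hτ' : H.IsEveStrat fun _ ↦ τ') (hS : ∀ v ∈ S, ∀ w, H.Move τ' v w → w ∈ X ∪ S)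
    (hP : ∀ ρ, (∀ n, H.Move τ' (ρ n) (ρ (n + 1))) → (∀ n, ρ n ∈ S) → P (InfOcc ρ)) :
    S ⊆ X := by
  obtain ⟨τ, hτ⟩ := hX.prop
  exact Set.subset_union_right.trans
    (hX.le_of_ge ⟨_, hτ.union hτ' hS hP⟩ Set.subset_union_left)

theorem exists_move_notMem_of_maximal_isWinningRegion (hX : Maximal (H.IsWinningRegion P) X)
    (hτ' : H.IsEveStrat fun _ ↦ τ') {v : V} (hv : v ∉ X) : ∃ w ∉ X, H.Move τ' v w := by
  by_contra! hcon
  have enters : ∀ w, H.Move τ' v w → w ∈ X := fun w ↦ not_imp_not.mp (hcon w)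
  refine hv (Set.singleton_subset_iff.mp (subset_of_maximal_isWinningRegion hX hτ' ?_ ?_))
  · rintro _ rfl w hw
    exact .inl (enters w hw)
  · intro ρ hρ hstay
    have : ρ 1 ∈ X := enters _ (hstay 0 ▸ hρ 0)
    exact absurd (hstay 1 ▸ this) hv

theorem isWinningRegion_empty (hτ : H.IsEveStrat fun _ ↦ τ) : H.IsWinningRegion P ∅ :=
  ⟨τ, hτ, fun _ hv ↦ hv.elim, fun _ _ h0 ↦ h0.elim⟩

end WinningRegion

/-- The objective derived from `σ`: some outcome of `σ` from `s₀` visits every vertex of `A`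
infinitely often. -/
def IsCovered (H : TBGame V) (σ : List V → V → V) (s₀ : V) (A : Set V) : Prop :=
  ∃ ρ, H.IsOutcome σ s₀ ρ ∧ A ⊆ InfOcc ρ

theorem mem_of_maximal_isWinningRegion_isCovered [Finite V] (hσ : H.IsEveStrat σ) {X : Set V}
    (hX : Maximal (H.IsWinningRegion (H.IsCovered σ s₀)) X) : s₀ ∈ X := by
  by_contra h0
  obtain ⟨S, ⟨v, hv⟩, hdisj, hS, ρ, hρ, hSρ⟩ := exists_outcome_covering_closed_set h0
    fun h v hv ↦ exists_move_notMem_of_maximal_isWinningRegion hX (τ' := σ h) (fun _ ↦ hσ h) hv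
  choose! hist hhist using hS
  have hSX : S ⊆ X := by
    refine subset_of_maximal_isWinningRegion hX (τ' := fun v ↦ σ (hist v) v)
      (fun _ v ↦ hσ (hist v) v) hhist fun ρ' _ hstay ↦ ?_
    exact ⟨ρ, hρ, (infOcc_subset_of_forall_mem hstay).trans hSρ⟩
  exact Set.disjoint_left.mp hdisj hv (hSX hv)

end TBGame

/-- In a finite turn-based two-player game, for every Eve
strategy `σ` and state `s₀`, there is a memoryless Eve strategy `σ'` such that
every outcome of `σ'` from `s₀` visits infinitely often only vertices that some
outcome of `σ` from `s₀` visits infinitely often. -/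
theorem stmt12 {V : Type} [Fintype V] (H : TBGame V) (σ : List V → V → V)
    (hσ : H.IsEveStrat σ) (s₀ : V) :
    ∃ σ', H.IsEveStrat σ' ∧ Memoryless σ' ∧
      ∀ ρ', H.IsOutcome σ' s₀ ρ' →
        ∃ ρ, H.IsOutcome σ s₀ ρ ∧ InfOcc ρ' ⊆ InfOcc ρ := by
  have hempty : H.IsWinningRegion (H.IsCovered σ s₀) ∅ :=
    TBGame.isWinningRegion_empty (τ := σ []) fun _ ↦ hσ []
  obtain ⟨X, -, hX⟩ := Finite.exists_le_maximal hempty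
  obtain ⟨τ, hτ⟩ := hX.prop
  have h0 : s₀ ∈ X := TBGame.mem_of_maximal_isWinningRegion_isCovered hσ hX
  refine ⟨fun _ ↦ τ, hτ.isEveStrat, fun _ _ _ ↦ rfl, fun ρ' hρ' ↦ ?_⟩
  exact hτ.infOcc ρ' hρ'.move (hρ'.1.symm ▸ h0)
end
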